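/- Let d ≥ 1 and k ≥ 0 be integers and let u₀ : ℝ^d → ℝ satisfy ∫ |u₀(x)| (1 + |x|^{k+1}) dx < ∞. Let u(x,t) := (G(·,t) * u₀)(x). Then for every t > 0 and every x ∈ ℝ^d, | u(x,t) − π^{−d/2} e^{−|x|²/(4t)} Σ_{|α| ≤ k} ( (∫ y^α u₀(y) dy) / α! ) (4t)^{−(|α|+d)/2} ∏_{i=1}^d H_{α_i}(x_i/(2√t)) | ≤ (2π)^{−d/2} (2t)^{−(k+d+1)/2} Σ_{|α| = k+1} ( ‖x^α u₀(x)‖_{L¹} / √(α!) ) ( ∏_{i=1}^d (α_i + 1) )^{−1/12}. -/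

import Mathlib

open MeasureTheory Real Filter

noncomputable section

/-- Partial derivative in the `i`-th coordinate direction on `ℝ^d`. -/
def pd (d : ℕ) (i : Fin d) (f : EuclideanSpace ℝ (Fin d) → ℝ) :
    EuclideanSpace ℝ (Fin d) → ℝ :=
  fun x => fderiv ℝ f x (EuclideanSpace.single i 1)

/-- Mixed partial derivative `D^α = ∂₁^{α₁} ⋯ ∂_d^{α_d}`. -/
def Dmul (d : ℕ) (α : Fin d → ℕ) (f : EuclideanSpace ℝ (Fin d) → ℝ) :
    EuclideanSpace ℝ (Fin d) → ℝ :=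
  ((List.finRange d).map (fun i => (pd d i)^[α i])).foldr (· ∘ ·) id f

/-- Heat kernel `G(x,t) = (4πt)^{-d/2} exp(-|x|²/(4t))` on `ℝ^d`. -/
def heatKernel (d : ℕ) (x : EuclideanSpace ℝ (Fin d)) (t : ℝ) : ℝ :=
  (4 * π * t) ^ (-(d : ℝ) / 2) * Real.exp (-‖x‖ ^ 2 / (4 * t))

/-- The heat-kernel derivative approximation of order `k` built from `u₀`. -/
def heatApprox (d k : ℕ) (u₀ : EuclideanSpace ℝ (Fin d) → ℝ)
    (x : EuclideanSpace ℝ (Fin d)) (t : ℝ) : ℝ :=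
  ∑ j ∈ Finset.range (k + 1), ∑ α ∈ Finset.Nat.antidiagonalTuple d j,
    ((-1 : ℝ) ^ (∑ i, α i) / ∏ i, ((α i).factorial : ℝ)) *
      (∫ y, (∏ i, y i ^ α i) * u₀ y) * Dmul d α (fun z => heatKernel d z t) x

/-- The remainder function `F_α`. Here `k` should satisfy `|α| = k+1`. -/
def Falpha (d k : ℕ) (α : Fin d → ℕ) (f : EuclideanSpace ℝ (Fin d) → ℝ)
    (x : EuclideanSpace ℝ (Fin d)) : ℝ :=
  (-1 : ℝ) ^ (∑ i, α i) * ∫ t in (0:ℝ)..1,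
    ((k : ℝ) + 1) * (1 - t) ^ k / t ^ (d + ∑ i, α i) *
      ((∏ i, x i ^ α i) / ∏ i, ((α i).factorial : ℝ)) * f (t⁻¹ • x)

/-- Physicists' Hermite polynomial `H_n(x) = (-1)^n e^{x²} (d/dx)^n e^{-x²}`. -/
def hPoly (n : ℕ) (x : ℝ) : ℝ :=
  (-1 : ℝ) ^ n * Real.exp (x ^ 2) * iteratedDeriv n (fun y => Real.exp (-y ^ 2)) x


/-- The remainder of the exponential series on the closed left half-plane. -/
lemma norm_exp_sub_sum_le_of_re_nonpos (z : ℂ) (hz : z.re ≤ 0) (n : ℕ) :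
    ‖Complex.exp z - ∑ j ∈ Finset.range n, z ^ j / (j.factorial : ℂ)‖ ≤
      ‖z‖ ^ n / (n.factorial : ℝ) := by
  suffices h : ∀ n : ℕ, ∀ x : ℝ, 0 ≤ x →
      ‖Complex.exp (x * z) - ∑ j ∈ Finset.range n, (x * z) ^ j / (j.factorial : ℂ)‖ ≤
        (x * ‖z‖) ^ n / (n.factorial : ℝ) by
    simpa using h n 1 zero_le_one
  intro n
  induction n with
  | zero =>
    intro x hx
    simpa [Complex.norm_exp] using mul_nonpos_of_nonneg_of_nonpos hx hz
  | succ n ih =>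
    have hf : ∀ x : ℝ, HasDerivAt
        (fun x : ℝ => Complex.exp (x * z) -
          ∑ j ∈ Finset.range (n + 1), (x * z) ^ j / (j.factorial : ℂ))
        (z * (Complex.exp (x * z) - ∑ j ∈ Finset.range n, (x * z) ^ j / (j.factorial : ℂ))) x := by
      intro x
      have h0 : HasDerivAt (fun x : ℝ => (x : ℂ) * z) z x := by
        simpa using (Complex.ofRealCLM.hasDerivAt (x := x)).mul_const z
      have h1 : ∀ j : ℕ, HasDerivAt
          (fun x : ℝ => ((x : ℂ) * z) ^ (j + 1) / ((j + 1).factorial : ℂ))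
          (z * (((x : ℂ) * z) ^ j / (j.factorial : ℂ))) x := by
        intro j
        refine ((h0.pow (j + 1)).div_const _).congr_deriv ?_
        have h2 : (j.factorial : ℂ) ≠ 0 := by exact_mod_cast j.factorial_ne_zero
        have h3 : (j : ℂ) + 1 ≠ 0 := by exact_mod_cast j.succ_ne_zero
        rw [Nat.factorial_succ]
        push_cast
        field_simp
      have h4 := h0.cexp.sub
        ((HasDerivAt.fun_sum (u := Finset.range n) fun j _ => h1 j).add_const 1)
      simp only [Finset.sum_range_succ', pow_zero, Nat.factorial_zero, Nat.cast_one, div_one]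
      refine h4.congr_deriv ?_
      rw [mul_sub, Finset.mul_sum]
      ring
    have hB : ∀ x : ℝ, HasDerivAt
        (fun x : ℝ => (x * ‖z‖) ^ (n + 1) / ((n + 1).factorial : ℝ))
        (‖z‖ * ((x * ‖z‖) ^ n / (n.factorial : ℝ))) x := by
      intro x
      refine ((((hasDerivAt_id x).mul_const ‖z‖).pow (n + 1)).div_const _).congr_deriv ?_
      have h2 : (n.factorial : ℝ) ≠ 0 := by positivity
      rw [Nat.factorial_succ]
      push_cast
      simp only [id_eq]
      field_simp
    intro x hx
    refine image_norm_le_of_norm_deriv_right_le_deriv_boundary (a := 0) (b := x)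
      (fun y _ => (hf y).continuousAt.continuousWithinAt)
      (fun y _ => (hf y).hasDerivWithinAt) ?_ hB ?_ (Set.right_mem_Icc.mpr hx)
    · simp [Finset.sum_range_succ']
    · intro y hy
      rw [norm_mul]
      exact mul_le_mul_of_nonneg_left (ih y hy.1) (norm_nonneg z)

/-- The multinomial theorem, normalised by factorials. -/
lemma sum_antidiagonalTuple_prod_pow_div_factorial {K : Type*} [Field K] [CharZero K]
    (d n : ℕ) (a : Fin d → K) :
    ∑ α ∈ Finset.Nat.antidiagonalTuple d n, ∏ i, a i ^ α i / ((α i).factorial : K) =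
      (∑ i, a i) ^ n / (n.factorial : K) := by
  have hset : Finset.Nat.antidiagonalTuple d n = Finset.piAntidiag Finset.univ n := by
    ext α
    simp [Finset.Nat.mem_antidiagonalTuple]
  rw [hset, Finset.sum_pow_eq_sum_piAntidiag, Finset.sum_div]
  refine Finset.sum_congr rfl fun α hα => ?_
  have hα' : ∑ i, α i = n := (Finset.mem_piAntidiag.mp hα).1
  have hspec := Nat.multinomial_spec (Finset.univ : Finset (Fin d)) α
  rw [hα'] at hspec
  have hspec' : (∏ i, ((α i).factorial : K)) * (Nat.multinomial Finset.univ α : K) =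
      (n.factorial : K) := by exact_mod_cast hspec
  have h1 : (∏ i, ((α i).factorial : K)) ≠ 0 :=
    Finset.prod_ne_zero_iff.mpr fun i _ => by exact_mod_cast (α i).factorial_ne_zero
  have h2 : (n.factorial : K) ≠ 0 := by exact_mod_cast n.factorial_ne_zero
  rw [Finset.prod_div_distrib, div_eq_div_iff h1 h2, ← hspec']
  ring

lemma integrable_abs_two_mul_pow_mul_exp (n : ℕ) :
    Integrable fun s : ℝ => |2 * s| ^ n * Real.exp (-s ^ 2) := by
  have h := (integrable_rpow_mul_exp_neg_mul_sq (b := 1) one_pos (s := n)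
    (by have := n.cast_nonneg (α := ℝ); linarith)).norm.const_mul (2 ^ n)
  refine h.congr (Eventually.of_forall fun s => ?_)
  simp [abs_mul, mul_pow, mul_assoc]

/-- The absolute moments `∫ |2s|^n e^{-s²} ds`. -/
def absMoment (n : ℕ) : ℝ := ∫ s : ℝ, |2 * s| ^ n * Real.exp (-s ^ 2)

lemma absMoment_eq (n : ℕ) : absMoment n = 2 ^ n * Real.Gamma (((n : ℝ) + 1) / 2) := by
  have h1 := integral_comp_abs (f := fun s => |2 * s| ^ n * Real.exp (-s ^ 2))
  have h2 := integral_rpow_mul_exp_neg_rpow (p := 2) (q := n) two_pos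
    (by have := n.cast_nonneg (α := ℝ); linarith)
  have h3 : ∫ s in Set.Ioi (0 : ℝ), |2 * s| ^ n * Real.exp (-s ^ 2) =
      2 ^ n * ∫ s in Set.Ioi (0 : ℝ), s ^ (n : ℝ) * Real.exp (-s ^ (2 : ℝ)) := by
    rw [← integral_const_mul]
    refine setIntegral_congr_fun measurableSet_Ioi fun s hs => ?_
    have hs' : (0 : ℝ) < s := hs
    simp [abs_of_pos hs', mul_pow, mul_assoc]
  simp only [abs_mul, abs_abs, sq_abs] at h1
  rw [absMoment]
  simp only [abs_mul] at h3 ⊢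
  rw [h1, h3, h2]
  ring

lemma absMoment_nonneg (n : ℕ) : 0 ≤ absMoment n :=
  integral_nonneg fun s => by positivity

lemma absMoment_add_two (n : ℕ) : absMoment (n + 2) = 2 * (n + 1) * absMoment n := by
  rw [absMoment_eq, absMoment_eq]
  have h : (((n + 2 : ℕ) : ℝ) + 1) / 2 = ((n : ℝ) + 1) / 2 + 1 := by push_cast; ring
  rw [h, Real.Gamma_add_one (by positivity)]
  ring

lemma absMoment_pow_mul_le (n : ℕ) :
    absMoment n ^ 12 * (n + 1) ≤ (π * 2 ^ n * n.factorial) ^ 6 := by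
  induction n using Nat.twoStepInduction with
  | zero =>
    have h : absMoment 0 = √π := by rw [absMoment_eq]; simpa using Real.Gamma_one_half_eq
    have h2 : √π ^ 12 = π ^ 6 := by
      rw [show (12 : ℕ) = 2 * 6 from rfl, pow_mul, Real.sq_sqrt pi_pos.le]
    simp [h, h2]
  | one =>
    have h : absMoment 1 = 2 := by rw [absMoment_eq]; norm_num
    rw [h]
    have h3 : (3 : ℝ) ^ 6 ≤ π ^ 6 := pow_le_pow_left₀ (by norm_num) pi_gt_three.le 6
    norm_num [mul_pow]
    linarith
  | more n ih _ =>
    rw [absMoment_add_two, Nat.factorial_succ, Nat.factorial_succ]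
    push_cast
    set m : ℝ := (n : ℝ)
    have hm0 : 0 ≤ m := Nat.cast_nonneg n
    have hpoly : (m + 1) ^ 5 * (m + 3) ≤ (m + 2) ^ 6 := by
      nlinarith [pow_nonneg hm0 2, pow_nonneg hm0 3, pow_nonneg hm0 4, pow_nonneg hm0 5]
    calc (2 * (m + 1) * absMoment n) ^ 12 * (m + 2 + 1)
        = 2 ^ 12 * (m + 1) ^ 6 * (absMoment n ^ 12 * (m + 1)) * ((m + 1) ^ 5 * (m + 3)) := by ring
      _ ≤ 2 ^ 12 * (m + 1) ^ 6 * (π * 2 ^ n * n.factorial) ^ 6 * (m + 2) ^ 6 := by gcongr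
      _ = _ := by ring

/-- Comparison of the absolute moments with the normalising constants of the Hermite functions. -/
lemma absMoment_le (n : ℕ) :
    absMoment n ≤ √π * (√2 ^ n * √(n.factorial : ℝ) * ((n : ℝ) + 1) ^ (-(1 / 12 : ℝ))) := by
  refine le_of_pow_le_pow_left₀ (n := 12) (by norm_num) (by positivity) ?_
  have hs : ∀ a : ℝ, 0 ≤ a → √a ^ 12 = a ^ 6 := fun a ha => by
    rw [show (12 : ℕ) = 2 * 6 from rfl, pow_mul, Real.sq_sqrt ha]
  have hn : (((n : ℝ) + 1) ^ (-(1 / 12 : ℝ))) ^ 12 = ((n : ℝ) + 1)⁻¹ := by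
    rw [← Real.rpow_natCast, ← Real.rpow_mul (by positivity), ← Real.rpow_neg_one]
    norm_num
  have h2 : (√2 ^ n) ^ 12 = ((2 : ℝ) ^ n) ^ 6 := by
    rw [← pow_mul, mul_comm, pow_mul, hs 2 zero_le_two, ← pow_mul, mul_comm, pow_mul]
  rw [mul_pow, mul_pow, mul_pow, hn, h2, hs _ pi_pos.le, hs _ (by positivity),
    ← mul_assoc, ← div_eq_mul_inv, le_div_iff₀ (by positivity)]
  refine (absMoment_pow_mul_le n).trans_eq ?_
  ring

/-- The integrand of the Fourier representation of `H_n(z) e^{-z²}`. -/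
def hermiteIntegrand (n : ℕ) (z s : ℝ) : ℂ :=
  (-(2 * s * Complex.I)) ^ n * Complex.exp (-(s : ℂ) ^ 2 + 2 * z * s * Complex.I)

lemma continuous_hermiteIntegrand (n : ℕ) (z : ℝ) : Continuous (hermiteIntegrand n z) := by
  unfold hermiteIntegrand
  fun_prop

lemma norm_hermiteIntegrand (n : ℕ) (z s : ℝ) :
    ‖hermiteIntegrand n z s‖ = |2 * s| ^ n * Real.exp (-s ^ 2) := by
  rw [hermiteIntegrand, norm_mul, Complex.norm_exp, norm_pow]
  simp [← Complex.ofReal_pow, abs_mul]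

lemma integrable_hermiteIntegrand (n : ℕ) (z : ℝ) : Integrable (hermiteIntegrand n z) :=
  (integrable_abs_two_mul_pow_mul_exp n).mono'
    (continuous_hermiteIntegrand n z).aestronglyMeasurable
    (Eventually.of_forall fun s => (norm_hermiteIntegrand n z s).le)

lemma integral_hermiteIntegrand_zero (z : ℝ) :
    ∫ s, hermiteIntegrand 0 z s = (√π * Real.exp (-z ^ 2) : ℝ) := by
  have h := integral_cexp_quadratic (b := -1) (by simp) (2 * z * Complex.I) 0
  simp only [hermiteIntegrand, pow_zero, one_mul]
  calc _ = ∫ s : ℝ, Complex.exp (-1 * (s : ℂ) ^ 2 + 2 * z * Complex.I * s + 0) := by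
        refine integral_congr_ae (Eventually.of_forall fun s => ?_)
        simp only
        congr 1
        ring
    _ = _ := by
        rw [h, Real.sqrt_eq_rpow]
        push_cast [Complex.ofReal_cpow pi_pos.le]
        congr 2
        · simp
        · ring_nf
          simp

lemma hasDerivAt_integral_hermiteIntegrand (n : ℕ) (z : ℝ) :
    HasDerivAt (fun z => ∫ s, hermiteIntegrand n z s) (-∫ s, hermiteIntegrand (n + 1) z s) z := by
  rw [← integral_neg]
  refine (hasDerivAt_integral_of_dominated_loc_of_deriv_le
    (F' := fun z s => -hermiteIntegrand (n + 1) z s)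
    (bound := fun s => |2 * s| ^ (n + 1) * Real.exp (-s ^ 2)) univ_mem
    (Eventually.of_forall fun z => (continuous_hermiteIntegrand n z).aestronglyMeasurable)
    (integrable_hermiteIntegrand n z)
    (continuous_hermiteIntegrand (n + 1) z).neg.aestronglyMeasurable
    (Eventually.of_forall fun s z _ => by rw [norm_neg, norm_hermiteIntegrand])
    (integrable_abs_two_mul_pow_mul_exp (n + 1))
    (Eventually.of_forall fun s z _ => ?_)).2
  have h0 : HasDerivAt (fun z : ℝ => -(s : ℂ) ^ 2 + 2 * (z : ℂ) * s * Complex.I)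
      (2 * s * Complex.I) z := by
    have h := ((((Complex.ofRealCLM.hasDerivAt (x := z)).const_mul 2).mul_const
      (s : ℂ)).mul_const Complex.I).const_add (-(s : ℂ) ^ 2)
    simpa using h
  refine (h0.cexp.const_mul ((-(2 * s * Complex.I)) ^ n)).congr_deriv ?_
  rw [hermiteIntegrand]
  ring

lemma integral_hermiteIntegrand_eq_iteratedDeriv (n : ℕ) (z : ℝ) :
    ∫ s, hermiteIntegrand n z s =
      (√π * ((-1) ^ n * iteratedDeriv n (fun y => Real.exp (-y ^ 2)) z) : ℝ) := by
  induction n generalizing z with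
  | zero => simpa using integral_hermiteIntegrand_zero z
  | succ n ih =>
    have hsmooth : ContDiff ℝ (n + 1 : ℕ) fun y : ℝ => Real.exp (-y ^ 2) := by fun_prop
    have h1 : HasDerivAt (iteratedDeriv n fun y : ℝ => Real.exp (-y ^ 2))
        (iteratedDeriv (n + 1) (fun y : ℝ => Real.exp (-y ^ 2)) z) z := by
      rw [iteratedDeriv_succ]
      exact (hsmooth.differentiable_iteratedDeriv n (by exact_mod_cast n.lt_succ_self) z).hasDerivAt
    have h2 := ((h1.const_mul ((-1) ^ n)).const_mul √π).ofReal_comp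
    have h3 := hasDerivAt_integral_hermiteIntegrand n z
    rw [funext ih] at h3
    have h4 := h3.unique h2
    rw [neg_eq_iff_eq_neg] at h4
    rw [h4, ← Complex.ofReal_neg]
    congr 1
    ring

/-- The Fourier representation of the Hermite polynomials. -/
lemma integral_hermiteIntegrand (n : ℕ) (z : ℝ) :
    ∫ s, hermiteIntegrand n z s = (√π * (hPoly n z * Real.exp (-z ^ 2)) : ℝ) := by
  rw [integral_hermiteIntegrand_eq_iteratedDeriv, hPoly, Real.exp_neg (z ^ 2)]
  congr 2
  field_simp

lemma prod_hermiteIntegrand_mul_pow {d : ℕ} (z w s : Fin d → ℝ) (α : Fin d → ℕ) :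
    ∏ i, (hermiteIntegrand (α i) (z i) (s i) * ((w i : ℂ) ^ α i / ((α i).factorial : ℂ))) =
      (∏ i, hermiteIntegrand 0 (z i) (s i)) *
        ∏ i, (-(2 * s i * Complex.I) * w i) ^ α i / ((α i).factorial : ℂ) := by
  rw [← Finset.prod_mul_distrib]
  refine Finset.prod_congr rfl fun i _ => ?_
  simp only [hermiteIntegrand]
  rw [mul_pow]
  ring

/-- Taylor expansion of order `k` in `w` of the product Gaussian `∏ e^{-(zᵢ-wᵢ)²}`. -/
def gaussTaylor (d k : ℕ) (z w : Fin d → ℝ) : ℝ :=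
  ∑ j ∈ Finset.range (k + 1), ∑ α ∈ Finset.Nat.antidiagonalTuple d j,
    ∏ i, hPoly (α i) (z i) * Real.exp (-z i ^ 2) * (w i ^ α i / ((α i).factorial : ℝ))

lemma hermiteIntegrand_zero_shift (z w s : ℝ) :
    hermiteIntegrand 0 (z - w) s =
      hermiteIntegrand 0 z s * Complex.exp (-(2 * s * Complex.I) * w) := by
  simp only [hermiteIntegrand, pow_zero, one_mul]
  rw [← Complex.exp_add]
  congr 1
  push_cast
  ring

/-- The remainder of the Taylor expansion of the product Gaussian, as a Fourier integral. -/
lemma integral_gaussTaylor_remainder (d k : ℕ) (z w : Fin d → ℝ) :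
    ∫ s : Fin d → ℝ, (∏ i, hermiteIntegrand 0 (z i) (s i)) *
        (Complex.exp (∑ i, -(2 * s i * Complex.I) * w i) -
          ∑ j ∈ Finset.range (k + 1),
            (∑ i, -(2 * s i * Complex.I) * w i) ^ j / (j.factorial : ℂ)) =
      ((√π ^ d * (∏ i, Real.exp (-(z i - w i) ^ 2) - gaussTaylor d k z w) : ℝ) : ℂ) := by
  have hint : ∀ α : Fin d → ℕ, Integrable fun s : Fin d → ℝ =>
      ∏ i, (hermiteIntegrand (α i) (z i) (s i) * ((w i : ℂ) ^ α i / ((α i).factorial : ℂ))) :=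
    fun α => Integrable.fintype_prod fun i => (integrable_hermiteIntegrand _ _).mul_const _
  have hint0 : Integrable fun s : Fin d → ℝ => ∏ i, hermiteIntegrand 0 (z i - w i) (s i) :=
    Integrable.fintype_prod fun i => integrable_hermiteIntegrand _ _
  have hterm : ∀ α : Fin d → ℕ, ∫ s : Fin d → ℝ,
      ∏ i, (hermiteIntegrand (α i) (z i) (s i) * ((w i : ℂ) ^ α i / ((α i).factorial : ℂ))) =
      ((√π ^ d * ∏ i, hPoly (α i) (z i) * Real.exp (-z i ^ 2) *
        (w i ^ α i / ((α i).factorial : ℝ)) : ℝ) : ℂ) := by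
    intro α
    rw [integral_fintype_prod_volume_eq_prod
      fun i s => hermiteIntegrand (α i) (z i) s * ((w i : ℂ) ^ α i / ((α i).factorial : ℂ))]
    simp only [integral_mul_const, integral_hermiteIntegrand]
    have hd : √π ^ d = ∏ _i : Fin d, √π := by simp
    rw [hd, ← Finset.prod_mul_distrib]
    push_cast
    refine Finset.prod_congr rfl fun i _ => ?_
    ring
  calc _ = ∫ s : Fin d → ℝ, ((∏ i, hermiteIntegrand 0 (z i - w i) (s i)) -
        ∑ j ∈ Finset.range (k + 1), ∑ α ∈ Finset.Nat.antidiagonalTuple d j,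
          ∏ i, (hermiteIntegrand (α i) (z i) (s i) *
            ((w i : ℂ) ^ α i / ((α i).factorial : ℂ)))) := by
        refine integral_congr_ae (Eventually.of_forall fun s => ?_)
        simp only [prod_hermiteIntegrand_mul_pow]
        simp only [hermiteIntegrand_zero_shift, Finset.prod_mul_distrib, ← Finset.mul_sum,
          ← Complex.exp_sum, sum_antidiagonalTuple_prod_pow_div_factorial]
        rw [mul_sub]
    _ = _ := by
        rw [integral_sub hint0
          (integrable_finsetSum _ fun j _ => integrable_finsetSum _ fun α _ => hint α),
          integral_finsetSum _ fun j _ => integrable_finsetSum _ fun α _ => hint α]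
        simp_rw [integral_finsetSum _ fun (α : Fin d → ℕ) _ => hint α, hterm]
        rw [integral_fintype_prod_volume_eq_prod fun i s => hermiteIntegrand 0 (z i - w i) s]
        simp only [integral_hermiteIntegrand_zero, gaussTaylor]
        push_cast
        simp only [Finset.prod_mul_distrib, mul_sub, Finset.mul_sum]
        simp

lemma abs_gaussTaylor_remainder_le (d k : ℕ) (z w : Fin d → ℝ) :
    |∏ i, Real.exp (-(z i - w i) ^ 2) - gaussTaylor d k z w| ≤
      ∑ α ∈ Finset.Nat.antidiagonalTuple d (k + 1),
        ∏ i, (√2 ^ α i * √((α i).factorial : ℝ) * ((α i : ℝ) + 1) ^ (-(1 / 12 : ℝ)) *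
          (|w i| ^ α i / ((α i).factorial : ℝ))) := by
  have hpi : 0 < √π ^ d := by positivity
  have hint : ∀ α : Fin d → ℕ, Integrable fun s : Fin d → ℝ =>
      ∏ i, (|2 * s i| ^ α i * Real.exp (-s i ^ 2) * (|w i| ^ α i / ((α i).factorial : ℝ))) :=
    fun α => Integrable.fintype_prod
      (f := fun i s => |2 * s| ^ α i * Real.exp (-s ^ 2) * (|w i| ^ α i / ((α i).factorial : ℝ)))
      fun i => (integrable_abs_two_mul_pow_mul_exp (α i)).mul_const _
  refine le_of_mul_le_mul_left ?_ hpi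
  calc √π ^ d * |∏ i, Real.exp (-(z i - w i) ^ 2) - gaussTaylor d k z w|
      = ‖((√π ^ d * (∏ i, Real.exp (-(z i - w i) ^ 2) - gaussTaylor d k z w) : ℝ) : ℂ)‖ := by
        rw [Complex.norm_real, norm_mul, Real.norm_of_nonneg hpi.le, Real.norm_eq_abs]
    _ ≤ ∫ s : Fin d → ℝ, ∑ α ∈ Finset.Nat.antidiagonalTuple d (k + 1),
          ∏ i, (|2 * s i| ^ α i * Real.exp (-s i ^ 2) *
            (|w i| ^ α i / ((α i).factorial : ℝ))) := by
        rw [← integral_gaussTaylor_remainder]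
        refine norm_integral_le_of_norm_le (integrable_finsetSum _ fun α _ => hint α)
          (Eventually.of_forall fun s => ?_)
        have hre : (∑ i, -(2 * (s i : ℂ) * Complex.I) * w i).re ≤ 0 := by simp
        have hnorm : ‖∑ i, -(2 * (s i : ℂ) * Complex.I) * w i‖ ≤ ∑ i, |2 * s i| * |w i| := by
          refine (norm_sum_le _ _).trans_eq (Finset.sum_congr rfl fun i _ => ?_)
          simp [abs_mul]
        rw [norm_mul, norm_prod]
        calc _ ≤ (∏ i, ‖hermiteIntegrand 0 (z i) (s i)‖) *
              ((∑ i, |2 * s i| * |w i|) ^ (k + 1) / ((k + 1).factorial : ℝ)) := by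
              refine mul_le_mul_of_nonneg_left
                ((norm_exp_sub_sum_le_of_re_nonpos _ hre (k + 1)).trans ?_)
                (Finset.prod_nonneg fun i _ => norm_nonneg _)
              gcongr
          _ = _ := by
              rw [← sum_antidiagonalTuple_prod_pow_div_factorial, Finset.mul_sum]
              refine Finset.sum_congr rfl fun α _ => ?_
              rw [← Finset.prod_mul_distrib]
              refine Finset.prod_congr rfl fun i _ => ?_
              rw [norm_hermiteIntegrand, mul_pow]
              ring
    _ = ∑ α ∈ Finset.Nat.antidiagonalTuple d (k + 1),
          ∏ i, (absMoment (α i) * (|w i| ^ α i / ((α i).factorial : ℝ))) := by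
        rw [integral_finsetSum _ fun α _ => hint α]
        refine Finset.sum_congr rfl fun α _ => ?_
        rw [integral_fintype_prod_volume_eq_prod fun i s =>
          |2 * s| ^ α i * Real.exp (-s ^ 2) * (|w i| ^ α i / ((α i).factorial : ℝ))]
        simp only [integral_mul_const, absMoment]
    _ ≤ _ := by
        rw [Finset.mul_sum]
        refine Finset.sum_le_sum fun α _ => ?_
        have hd : √π ^ d = ∏ _i : Fin d, √π := by simp
        rw [hd, ← Finset.prod_mul_distrib]
        refine Finset.prod_le_prod
          (fun i _ => mul_nonneg (absMoment_nonneg _) (by positivity)) fun i _ => ?_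
        rw [← mul_assoc]
        exact mul_le_mul_of_nonneg_right (absMoment_le _) (by positivity)

lemma rpow_neg_natCast_div_two {a : ℝ} (ha : 0 ≤ a) (n : ℕ) :
    a ^ (-(n : ℝ) / 2) = (√a ^ n)⁻¹ := by
  rw [Real.sqrt_eq_rpow, ← Real.rpow_natCast, ← Real.rpow_mul ha, ← Real.rpow_neg ha]
  congr 1
  ring

lemma abs_prod_pow_le_norm_pow {d : ℕ} (y : EuclideanSpace ℝ (Fin d)) (α : Fin d → ℕ) :
    |∏ i, y i ^ α i| ≤ ‖y‖ ^ ∑ i, α i := by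
  rw [Finset.abs_prod, ← Finset.prod_pow_eq_pow_sum]
  refine Finset.prod_le_prod (fun i _ => abs_nonneg _) fun i _ => ?_
  rw [abs_pow]
  exact pow_le_pow_left₀ (abs_nonneg _) (PiLp.norm_apply_le y i) _

/-- The monomial moments up to order `n` exist when the weighted `L¹` norm of order `n` does. -/
lemma integrable_prod_pow_mul {d n : ℕ} {u₀ : EuclideanSpace ℝ (Fin d) → ℝ}
    (hint : Integrable fun x => u₀ x * (1 + ‖x‖ ^ n)) (hmeas : AEStronglyMeasurable u₀)
    (α : Fin d → ℕ) (hα : ∑ i, α i ≤ n) :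
    Integrable fun y : EuclideanSpace ℝ (Fin d) => (∏ i, y i ^ α i) * u₀ y := by
  refine hint.norm.mono' ?_ (Eventually.of_forall fun y => ?_)
  · exact (Continuous.aestronglyMeasurable (by fun_prop)).mul hmeas
  · have hle : ‖y‖ ^ (∑ i, α i) ≤ 1 + ‖y‖ ^ n := by
      rcases le_total ‖y‖ 1 with h | h
      · have h1 := pow_le_one₀ (n := ∑ i, α i) (norm_nonneg y) h
        have h2 := pow_nonneg (norm_nonneg y) n
        linarith
      · have h1 := pow_le_pow_right₀ h hα
        linarith
    rw [norm_mul, norm_mul, mul_comm, Real.norm_eq_abs (∏ i, y i ^ α i)]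
    exact mul_le_mul_of_nonneg_left
      (((abs_prod_pow_le_norm_pow y α).trans hle).trans (le_abs_self _)) (norm_nonneg _)

lemma aestronglyMeasurable_of_integrable_mul {d n : ℕ} {u₀ : EuclideanSpace ℝ (Fin d) → ℝ}
    (hint : Integrable fun x => u₀ x * (1 + ‖x‖ ^ n)) : AEStronglyMeasurable u₀ := by
  have hpos : ∀ x : EuclideanSpace ℝ (Fin d), 1 + ‖x‖ ^ n ≠ 0 := fun x => by positivity
  have hcont : Continuous fun x : EuclideanSpace ℝ (Fin d) => (1 + ‖x‖ ^ n)⁻¹ :=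
    Continuous.inv₀ (by fun_prop) hpos
  refine (hint.aestronglyMeasurable.mul hcont.aestronglyMeasurable).congr
    (Eventually.of_forall fun x => ?_)
  simp [mul_assoc, mul_inv_cancel₀ (hpos x)]

lemma exp_neg_norm_sq_div {d : ℕ} (x : EuclideanSpace ℝ (Fin d)) {t : ℝ} (ht : 0 < t) :
    Real.exp (-‖x‖ ^ 2 / (4 * t)) = ∏ i, Real.exp (-(x i / (2 * √t)) ^ 2) := by
  rw [← Real.exp_sum, EuclideanSpace.real_norm_sq_eq, ← Finset.sum_neg_distrib, Finset.sum_div]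
  congr 1
  refine Finset.sum_congr rfl fun i _ => ?_
  rw [div_pow, mul_pow, Real.sq_sqrt ht.le]
  ring

lemma heatKernel_sub {d : ℕ} (x y : EuclideanSpace ℝ (Fin d)) {t : ℝ} (ht : 0 < t) :
    heatKernel d (x - y) t = ((2 * √π * √t) ^ d)⁻¹ *
      ∏ i, Real.exp (-(x i / (2 * √t) - y i / (2 * √t)) ^ 2) := by
  have h : √(4 * π * t) = 2 * √π * √t := by
    rw [Real.sqrt_mul (by positivity), Real.sqrt_mul (by norm_num),
      show (4 : ℝ) = 2 ^ 2 by norm_num, Real.sqrt_sq zero_le_two]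
  rw [heatKernel, exp_neg_norm_sq_div _ ht, rpow_neg_natCast_div_two (by positivity), h]
  simp [sub_div]

lemma integrable_heatKernel_mul {d : ℕ} (x : EuclideanSpace ℝ (Fin d)) {t : ℝ} (ht : 0 < t)
    {u₀ : EuclideanSpace ℝ (Fin d) → ℝ} (hu : Integrable u₀) :
    Integrable fun y => heatKernel d (x - y) t * u₀ y := by
  refine hu.bdd_mul (c := (4 * π * t) ^ (-(d : ℝ) / 2)) ?_ (Eventually.of_forall fun y => ?_)
  · unfold heatKernel
    exact Continuous.aestronglyMeasurable (by fun_prop)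
  · rw [heatKernel, norm_mul, Real.norm_of_nonneg (by positivity),
      Real.norm_of_nonneg (by positivity)]
    refine mul_le_of_le_one_right (by positivity) (Real.exp_le_one_iff.mpr ?_)
    exact div_nonpos_of_nonpos_of_nonneg (by simp) (by positivity)

/-- the Hermite polynomial approximation with its `L^∞` error estimate. -/
theorem stmt_5 (d k : ℕ) (hd : 1 ≤ d) (u₀ : EuclideanSpace ℝ (Fin d) → ℝ)
    (hint : Integrable (fun x => u₀ x * (1 + ‖x‖ ^ (k + 1))))
    (t : ℝ) (ht : 0 < t) (x : EuclideanSpace ℝ (Fin d)) :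
    |(∫ y, heatKernel d (x - y) t * u₀ y) -
        π ^ (-(d : ℝ) / 2) * Real.exp (-‖x‖ ^ 2 / (4 * t)) *
          ∑ j ∈ Finset.range (k + 1), ∑ α ∈ Finset.Nat.antidiagonalTuple d j,
            ((∫ y, (∏ i, y i ^ α i) * u₀ y) / ∏ i, ((α i).factorial : ℝ)) *
              (4 * t) ^ (-(((∑ i, α i : ℕ) : ℝ) + d) / 2) *
              ∏ i, hPoly (α i) (x i / (2 * Real.sqrt t))| ≤
      (2 * π) ^ (-(d : ℝ) / 2) * (2 * t) ^ (-((k : ℝ) + d + 1) / 2) *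
        ∑ α ∈ Finset.Nat.antidiagonalTuple d (k + 1),
          ((∫ y, |(∏ i, y i ^ α i) * u₀ y|) / Real.sqrt (∏ i, ((α i).factorial : ℝ))) *
            (∏ i, ((α i : ℝ) + 1)) ^ (-(1 / 12 : ℝ)) := by
  have hmeas := aestronglyMeasurable_of_integrable_mul hint
  have hmom := integrable_prod_pow_mul hint hmeas
  have hu : Integrable u₀ := by simpa using hmom 0 (by simp)
  have hst : 0 < √t := Real.sqrt_pos.mpr ht
  set C : ℝ := ((2 * √π * √t) ^ d)⁻¹ with hC
  set z : Fin d → ℝ := fun i => x i / (2 * √t)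
  set c : (Fin d → ℕ) → ℝ := fun α =>
    C * (∏ i, hPoly (α i) (z i) * Real.exp (-z i ^ 2)) *
      ((2 * √t) ^ (∑ i, α i) * ∏ i, ((α i).factorial : ℝ))⁻¹ with hc
  have hs4 : √(4 * t) = 2 * √t := by
    rw [Real.sqrt_mul (by norm_num), show (4 : ℝ) = 2 ^ 2 by norm_num, Real.sqrt_sq zero_le_two]
  have htaylor : ∀ y : EuclideanSpace ℝ (Fin d),
      C * gaussTaylor d k z (fun i => y i / (2 * √t)) * u₀ y =
      ∑ j ∈ Finset.range (k + 1), ∑ α ∈ Finset.Nat.antidiagonalTuple d j,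
        c α * ((∏ i, y i ^ α i) * u₀ y) := by
    intro y
    simp only [gaussTaylor, Finset.mul_sum, Finset.sum_mul, hc]
    refine Finset.sum_congr rfl fun j _ => Finset.sum_congr rfl fun α _ => ?_
    simp only [Finset.prod_mul_distrib, Finset.prod_div_distrib, div_pow,
      Finset.prod_pow_eq_pow_sum]
    rw [mul_inv]
    ring
  have hterm : ∀ j ∈ Finset.range (k + 1), ∀ α ∈ Finset.Nat.antidiagonalTuple d j,
      Integrable fun y : EuclideanSpace ℝ (Fin d) => c α * ((∏ i, y i ^ α i) * u₀ y) := by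
    intro j hj α hα
    refine (hmom α ?_).const_mul _
    rw [Finset.Nat.mem_antidiagonalTuple.mp hα]
    exact (Finset.mem_range.mp hj).le
  have hTint : Integrable fun y : EuclideanSpace ℝ (Fin d) =>
      C * gaussTaylor d k z (fun i => y i / (2 * √t)) * u₀ y := by
    simp only [htaylor]
    exact integrable_finsetSum _ fun j hj => integrable_finsetSum _ fun α hα => hterm j hj α hα
  have happrox : π ^ (-(d : ℝ) / 2) * Real.exp (-‖x‖ ^ 2 / (4 * t)) *
      ∑ j ∈ Finset.range (k + 1), ∑ α ∈ Finset.Nat.antidiagonalTuple d j,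
        ((∫ y, (∏ i, y i ^ α i) * u₀ y) / ∏ i, ((α i).factorial : ℝ)) *
          (4 * t) ^ (-(((∑ i, α i : ℕ) : ℝ) + d) / 2) * ∏ i, hPoly (α i) (z i) =
      ∫ y : EuclideanSpace ℝ (Fin d),
        C * gaussTaylor d k z (fun i => y i / (2 * √t)) * u₀ y := by
    simp only [htaylor]
    rw [integral_finsetSum _ fun j hj => integrable_finsetSum _ fun α hα => hterm j hj α hα,
      Finset.mul_sum]
    refine Finset.sum_congr rfl fun j hj => ?_
    rw [integral_finsetSum _ fun α hα => hterm j hj α hα, Finset.mul_sum]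
    refine Finset.sum_congr rfl fun α _ => ?_
    rw [integral_const_mul, ← Nat.cast_add, rpow_neg_natCast_div_two pi_pos.le,
      rpow_neg_natCast_div_two (a := 4 * t) (by positivity), hs4, exp_neg_norm_sq_div x ht]
    simp only [hc, hC, Finset.prod_mul_distrib, pow_add, mul_pow, mul_inv]
    ring
  have hpt : ∀ y : EuclideanSpace ℝ (Fin d),
      ‖heatKernel d (x - y) t * u₀ y - C * gaussTaylor d k z (fun i => y i / (2 * √t)) * u₀ y‖ ≤
      ∑ α ∈ Finset.Nat.antidiagonalTuple d (k + 1),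
        C * (∏ i, (√2 ^ α i * √((α i).factorial : ℝ) * ((α i : ℝ) + 1) ^ (-(1 / 12 : ℝ)))) *
          ((2 * √t) ^ (∑ i, α i) * ∏ i, ((α i).factorial : ℝ))⁻¹ *
            |(∏ i, y i ^ α i) * u₀ y| := by
    intro y
    have hC0 : 0 ≤ C := by positivity
    rw [heatKernel_sub x y ht, ← hC, ← sub_mul, ← mul_sub, norm_mul, norm_mul,
      Real.norm_of_nonneg hC0, Real.norm_eq_abs, Real.norm_eq_abs]
    refine (mul_le_mul_of_nonneg_right (mul_le_mul_of_nonneg_left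
      (abs_gaussTaylor_remainder_le d k z fun i => y i / (2 * √t)) hC0)
        (abs_nonneg (u₀ y))).trans_eq ?_
    rw [Finset.mul_sum, Finset.sum_mul]
    refine Finset.sum_congr rfl fun α _ => ?_
    rw [abs_mul, Finset.abs_prod]
    simp only [Finset.prod_mul_distrib, Finset.prod_div_distrib, abs_div, div_pow,
      Finset.prod_pow_eq_pow_sum, abs_pow, abs_of_pos (mul_pos two_pos hst)]
    rw [mul_inv]
    ring
  have hbound : ∀ α ∈ Finset.Nat.antidiagonalTuple d (k + 1),
      Integrable fun y : EuclideanSpace ℝ (Fin d) =>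
        C * (∏ i, (√2 ^ α i * √((α i).factorial : ℝ) * ((α i : ℝ) + 1) ^ (-(1 / 12 : ℝ)))) *
          ((2 * √t) ^ (∑ i, α i) * ∏ i, ((α i).factorial : ℝ))⁻¹ *
            |(∏ i, y i ^ α i) * u₀ y| := fun α hα =>
    (hmom α (Finset.Nat.mem_antidiagonalTuple.mp hα).le).abs.const_mul _
  rw [happrox, ← integral_sub (integrable_heatKernel_mul x ht hu) hTint, ← Real.norm_eq_abs]
  refine (norm_integral_le_of_norm_le (integrable_finsetSum _ hbound)
    (Eventually.of_forall hpt)).trans_eq ?_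
  rw [integral_finsetSum _ hbound, Finset.mul_sum]
  refine Finset.sum_congr rfl fun α hα => ?_
  have hsum : ∑ i, α i = k + 1 := Finset.Nat.mem_antidiagonalTuple.mp hα
  have hk : -((k : ℝ) + d + 1) / 2 = -((k + d + 1 : ℕ) : ℝ) / 2 := by push_cast; rfl
  rw [integral_const_mul, hk, rpow_neg_natCast_div_two (by positivity),
    rpow_neg_natCast_div_two (by positivity), Real.sqrt_mul zero_le_two, Real.sqrt_mul zero_le_two,
    ← Real.finsetProd_rpow _ _ fun i _ => by positivity]
  simp only [Finset.prod_mul_distrib, Finset.prod_pow_eq_pow_sum, hsum, hC]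
  set F : ℝ := ∏ i, ((α i).factorial : ℝ) with hF
  have hF0 : 0 < F := Finset.prod_pos fun i _ => by positivity
  have hsF : ∏ i, √((α i).factorial : ℝ) = √F := by
    simp only [Real.sqrt_eq_rpow, hF]
    exact Real.finsetProd_rpow _ _ (fun i _ => by positivity) _
  have h2 : (2 : ℝ) = √2 * √2 := (Real.mul_self_sqrt zero_le_two).symm
  have hFinv : F⁻¹ = (√F)⁻¹ * (√F)⁻¹ := by
    rw [← mul_inv, Real.mul_self_sqrt hF0.le]
  have hsF0 : √F ≠ 0 := (Real.sqrt_pos.mpr hF0).ne'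
  have hs2 : √2 ≠ 0 := by positivity
  have hspi : √π ≠ 0 := by positivity
  rw [hsF, mul_inv _ F, hFinv]
  generalize √2 = q at *
  simp only [h2]
  field_simp
  ring
end
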